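/- Inverse factorial series expansion for the Hurwitz zeta function: Let y ∈ [0,1] be real, let s ∈ ℂ with Re(s) > 1, let a ∈ ℕ₀, and let z ∈ ℂ with Re(z) > 0. Then the series ∑_{k=1}^{∞} (−1)^{k+a} (∑_{l=1}^{k} C(1−s, l+a) S_k^{(1)}(l) B_{l+a}(y)) / ((z+1)(z+2)⋯(z+k)) converges absolutely, and ∑_{k=0}^{∞} (k + z + 1 − y)^{−s} = z^{1−s}/(s−1) + (z^{1−s}/(s−1)) ∑_{k=1}^{a} (−1)^k C(1−s, k) B_k(y) / z^k + (z^{1−s−a}/(s−1)) ∑_{k=1}^{∞} (−1)^{k+a} (∑_{l=1}^{k} C(1−s, l+a) S_k^{(1)}(l) B_{l+a}(y)) / ((z+1)(z+2)⋯(z+k)). -/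

import Mathlib

open Finset in
/-- Unsigned Stirling numbers of the first kind, via the rising-factorial recurrence:
`z(z+1)⋯(z+k−1) = ∑ l, stirling1Unsigned k l * z^l`. -/
def stirling1Unsigned : ℕ → ℕ → ℕ
  | 0, 0 => 1
  | 0, _ + 1 => 0
  | k + 1, 0 => k * stirling1Unsigned k 0
  | k + 1, l + 1 => stirling1Unsigned k l + k * stirling1Unsigned k (l + 1)

/-- The Stirling numbers of the first kind `S_k^{(1)}(l)` of the paper, defined by
`z(z+1)⋯(z+k−1) = (−1)^k ∑_{l=0}^k (−1)^l S_k^{(1)}(l) z^l`, i.e.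
`S_k^{(1)}(l) = (−1)^{k−l}` times the coefficient of `z^l` in the rising factorial. -/
def S1 (k l : ℕ) : ℤ := (-1) ^ (k + l) * stirling1Unsigned k l

/-- The `n`-th Bernoulli polynomial `B_n(x) = ∑_{k=0}^n C(n,k) B_k x^{n−k}`,
with `B_1 = −1/2`. -/
noncomputable def bernPoly (n : ℕ) (x : ℝ) : ℝ :=
  ∑ k ∈ Finset.range (n + 1), (n.choose k : ℝ) * (bernoulli k : ℝ) * x ^ (n - k)

/-- The generalized binomial coefficient `C(w,k) = w(w−1)⋯(w−k+1)/k!`. -/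
noncomputable def cchoose (w : ℂ) (k : ℕ) : ℂ :=
  (∏ i ∈ Finset.range k, (w - i)) / (k.factorial : ℂ)

/-- The rising product `(z+1)(z+2)⋯(z+k)`. -/
noncomputable def risingProd (z : ℂ) (k : ℕ) : ℂ :=
  ∏ i ∈ Finset.range k, (z + i + 1)

/-- The rising product `(x+1)(x+2)⋯(x+k)` over the reals. -/
noncomputable def risingProdR (x : ℝ) (k : ℕ) : ℝ :=
  ∏ i ∈ Finset.range k, (x + i + 1)

/-- The digamma function `ψ(z) = Γ′(z)/Γ(z)`. -/
noncomputable def digamma (z : ℂ) : ℂ := deriv Complex.Gamma z / Complex.Gamma z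

/-!
For `Re w > 0` the Bernoulli generating function `G(w) = w e^{wy} / (e^w - 1)` is the geometric
series `∑ w e^{-(k + 1 - y) w}`, so integrating `G(v / z)` against `v^{s-2} e^{-v}` over `v > 0`
gives `Γ(s) z^{s-1}` times the Hurwitz sum.

On the other hand, the Fourier expansion of `G` in `y` is its partial fraction expansion over the
poles `2πin`. With the Taylor polynomial of degree `a ≥ 1` removed, the same integral is therefore a
superposition of kernels `u / (z - u)` with purely imaginary `u = v / (2πin)`. Each kernel has an
inverse factorial series in `z`, with numerators the rising factorials of `u`, that is, the Stirling
transforms of the powers `u^l`. Euler's product for `sinh` bounds the rising factorial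
`u (u + 1) ⋯ (u + k)` by `k! |u| e^{π|u|} ≤ k! |u| e^{v/2}`, which `e^{-v}` absorbs, so the series
can be integrated term by term. The moments of `u^l` are the values `B_{l+a}(y)` up to Gamma
factors.

The partial fraction expansion converges absolutely only for `a ≥ 1`. The case `a = 0` follows from
`a = 1` by summation by parts in the recurrence relating the inverse factorial series of `β l` and
`β (l + 1)`.
-/

noncomputable section

open Complex Filter Finset MeasureTheory Set Topology
open scoped Nat Real

section Stirling

theorem stirling1Unsigned_eq_stirlingFirst : ∀ k l, stirling1Unsigned k l = Nat.stirlingFirst k l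
  | 0, 0 => rfl
  | 0, _ + 1 => rfl
  | 1, 0 => rfl
  | k + 2, 0 => by
    rw [stirling1Unsigned, stirling1Unsigned_eq_stirlingFirst, Nat.stirlingFirst_succ_zero,
      Nat.stirlingFirst_succ_zero, mul_zero]
  | k + 1, l + 1 => by
    rw [stirling1Unsigned, stirling1Unsigned_eq_stirlingFirst, stirling1Unsigned_eq_stirlingFirst,
      Nat.stirlingFirst_succ_succ, add_comm]

variable {R : Type*} [CommSemiring R]

/-- The linear functional `u ^ l ↦ β l` (for `l ≥ 1`) applied to the rising factorial
`u (u + 1) ⋯ (u + k - 1)`. -/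
def stirlingTransform (β : ℕ → R) (k : ℕ) : R :=
  ∑ l ∈ Finset.Icc 1 k, (stirling1Unsigned k l : R) * β l

theorem stirlingTransform_eq_sum_range (β : ℕ → R) (k : ℕ) :
    stirlingTransform β k = ∑ l ∈ range k, (stirling1Unsigned k (l + 1) : R) * β (l + 1) := by
  rw [range_eq_Ico, Finset.sum_Ico_add' (fun l ↦ (stirling1Unsigned k l : R) * β l) 0 k 1]
  rfl

@[simp]
theorem stirlingTransform_one (β : ℕ → R) : stirlingTransform β 1 = β 1 := by
  simp [stirlingTransform, stirling1Unsigned]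

theorem stirlingTransform_add_two (β : ℕ → R) (k : ℕ) :
    stirlingTransform β (k + 2) =
      stirlingTransform (fun l ↦ β (l + 1)) (k + 1) + (k + 1) * stirlingTransform β (k + 1) := by
  have hzero : stirling1Unsigned (k + 1) 0 = 0 := by
    rw [stirling1Unsigned_eq_stirlingFirst, Nat.stirlingFirst_succ_zero]
  have htop : stirling1Unsigned (k + 1) (k + 2) = 0 := by
    rw [stirling1Unsigned_eq_stirlingFirst, Nat.stirlingFirst_eq_zero_of_lt (by lia)]
  calc stirlingTransform β (k + 2)
      = ∑ l ∈ range (k + 2), ((stirling1Unsigned (k + 1) l : R) * β (l + 1) +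
          (k + 1) * ((stirling1Unsigned (k + 1) (l + 1) : R) * β (l + 1))) := by
        rw [stirlingTransform_eq_sum_range]
        refine Finset.sum_congr rfl fun l _ ↦ ?_
        rw [stirling1Unsigned]
        push_cast
        ring
    _ = _ := by
        rw [Finset.sum_add_distrib, ← Finset.mul_sum]
        congr 1
        · rw [Finset.sum_range_succ', hzero, stirlingTransform_eq_sum_range]
          simp
        · rw [Finset.sum_range_succ, htop, stirlingTransform_eq_sum_range]
          simp

theorem stirlingTransform_const_mul (c : R) (β : ℕ → R) (k : ℕ) :
    stirlingTransform (fun l ↦ c * β l) k = c * stirlingTransform β k := by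
  simp only [stirlingTransform, Finset.mul_sum, mul_left_comm]

theorem stirlingTransform_pow (u : R) (k : ℕ) :
    stirlingTransform (u ^ ·) (k + 1) = ∏ i ∈ range (k + 1), (u + i) := by
  induction k with
  | zero => simp
  | succ k ih =>
    rw [stirlingTransform_add_two, Finset.prod_range_succ, ← ih]
    simp only [pow_succ', stirlingTransform_const_mul]
    push_cast
    ring

theorem stirlingTransform_single_one (k : ℕ) :
    stirlingTransform (Pi.single 1 (1 : R)) (k + 1) = k ! := by
  simp [stirlingTransform, Pi.single_apply, stirling1Unsigned_eq_stirlingFirst,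
    Nat.stirlingFirst_one_right]

end Stirling

section InverseFactorialSeries

theorem add_le_norm_add_natCast_add_one (z : ℂ) (k : ℕ) : z.re + (k + 1) ≤ ‖z + k + 1‖ := by
  simpa [add_assoc] using re_le_norm (z + k + 1)

theorem add_natCast_add_one_ne_zero {z : ℂ} (hz : 0 < z.re) (k : ℕ) : z + k + 1 ≠ 0 :=
  ne_zero_of_re_pos (by simpa using by positivity)

theorem risingProd_ne_zero {z : ℂ} (hz : 0 < z.re) (k : ℕ) : risingProd z k ≠ 0 :=
  Finset.prod_ne_zero_iff.mpr fun i _ ↦ add_natCast_add_one_ne_zero hz i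

/-- The terms, indexed from zero, of the inverse factorial series that rearranges the formal
series `∑_{l ≥ 1} β l / z ^ l`. -/
def inverseFactorialTerm (β : ℕ → ℂ) (z : ℂ) (k : ℕ) : ℂ :=
  stirlingTransform β (k + 1) / risingProd z (k + 1)

variable {β : ℕ → ℂ} {z : ℂ}

theorem mul_inverseFactorialTerm_zero (hz : 0 < z.re) :
    (z + 1) * inverseFactorialTerm β z 0 = β 1 := by
  have hne : z + 1 ≠ 0 := by simpa using add_natCast_add_one_ne_zero hz 0
  simp [inverseFactorialTerm, risingProd, mul_div_cancel₀, hne]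

theorem mul_inverseFactorialTerm_succ (hz : 0 < z.re) (k : ℕ) :
    (z + (k + 1 : ℕ) + 1) * inverseFactorialTerm β z (k + 1) =
      inverseFactorialTerm (fun l ↦ β (l + 1)) z k + (k + 1) * inverseFactorialTerm β z k := by
  have hne := add_natCast_add_one_ne_zero hz (k + 1)
  have hprod := risingProd_ne_zero hz (k + 1)
  have hsucc : risingProd z (k + 2) = risingProd z (k + 1) * (z + (k + 1 : ℕ) + 1) :=
    Finset.prod_range_succ _ _
  rw [inverseFactorialTerm, hsucc, stirlingTransform_add_two, inverseFactorialTerm,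
    inverseFactorialTerm]
  field_simp

theorem summable_norm_inverseFactorialTerm_of_shift (hz : 0 < z.re)
    (hshift : Summable fun k ↦ ‖inverseFactorialTerm (fun l ↦ β (l + 1)) z k‖) :
    Summable fun k ↦ ‖inverseFactorialTerm β z k‖ := by
  set X : ℕ → ℝ := fun k ↦ ‖inverseFactorialTerm β z k‖
  set X' : ℕ → ℝ := fun k ↦ ‖inverseFactorialTerm (fun l ↦ β (l + 1)) z k‖
  have hstep (k : ℕ) : ‖z + (k + 1 : ℕ) + 1‖ * X (k + 1) ≤ X' k + (k + 1) * X k := by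
    rw [← norm_mul, mul_inverseFactorialTerm_succ hz]
    refine (norm_add_le _ _).trans_eq ?_
    rw [norm_mul, ← Nat.cast_add_one, norm_natCast, Nat.cast_add_one]
  have henergy (n : ℕ) : z.re * ∑ k ∈ range n, X k + ‖z + n + 1‖ * X n ≤
      ‖β 1‖ + ∑ k ∈ range n, X' k := by
    induction n with
    | zero => simp [X, ← norm_mul, mul_inverseFactorialTerm_zero hz]
    | succ n ih =>
      rw [Finset.sum_range_succ, Finset.sum_range_succ]
      have := mul_le_mul_of_nonneg_right (add_le_norm_add_natCast_add_one z n)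
        (norm_nonneg (inverseFactorialTerm β z n))
      linarith [hstep n]
  refine summable_of_sum_range_le (c := (‖β 1‖ + ∑' k, X' k) / z.re)
    (fun _ ↦ norm_nonneg _) fun n ↦ ?_
  rw [le_div_iff₀' hz]
  have hpos : 0 ≤ ‖z + n + 1‖ * X n := by positivity
  linarith [henergy n, hshift.sum_le_tsum (range n) fun _ _ ↦ norm_nonneg _]

theorem eq_zero_of_summable_of_tendsto_mul {X : ℕ → ℂ} {L : ℂ} (hX : Summable X)
    (hL : Tendsto (fun k : ℕ ↦ (k : ℂ) * X k) atTop (𝓝 L)) : L = 0 := by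
  by_contra hne
  have hLpos : 0 < ‖L‖ := norm_pos_iff.mpr hne
  refine Real.not_summable_one_div_natCast (summable_of_isBigO_nat hX.norm ?_)
  refine Asymptotics.IsBigO.of_bound (2 / ‖L‖) ?_
  filter_upwards [hL.norm.eventually (lt_mem_nhds (half_lt_self hLpos)), eventually_gt_atTop 0]
    with k hk hk0
  have hkpos : (0 : ℝ) < k := Nat.cast_pos.mpr hk0
  rw [norm_mul, norm_natCast] at hk
  rw [norm_norm, Real.norm_of_nonneg (by positivity), div_mul_eq_mul_div,
    div_le_div_iff₀ hkpos hLpos]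
  linarith

-- Summing `(z + k + 2) X (k + 1) - (z + k + 1) X k = X' k - z X k` over `k`.
theorem tsum_inverseFactorialTerm_shift (hz : 0 < z.re)
    (hX : Summable (inverseFactorialTerm β z))
    (hX' : Summable (inverseFactorialTerm (fun l ↦ β (l + 1)) z)) :
    ∑' k, inverseFactorialTerm (fun l ↦ β (l + 1)) z k =
      z * ∑' k, inverseFactorialTerm β z k - β 1 := by
  set X := inverseFactorialTerm β z
  set X' := inverseFactorialTerm (fun l ↦ β (l + 1)) z
  have hpartial (n : ℕ) :
      (z + n + 1) * X n = β 1 + ∑ k ∈ range n, (X' k - z * X k) := by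
    induction n with
    | zero => simpa [X] using mul_inverseFactorialTerm_zero hz
    | succ n ih =>
      rw [Finset.sum_range_succ, ← add_assoc, ← ih, mul_inverseFactorialTerm_succ hz]
      ring
  have hlim : Tendsto (fun n : ℕ ↦ (z + n + 1) * X n) atTop
      (𝓝 (β 1 + (∑' k, X' k - z * ∑' k, X k))) := by
    simp only [hpartial]
    exact (hX'.hasSum.sub (hX.hasSum.mul_left z)).tendsto_sum_nat.const_add (β 1)
  have hlim' := hlim.sub (hX.tendsto_atTop_zero.const_mul (z + 1))
  have hzero := eq_zero_of_summable_of_tendsto_mul hX (hlim'.congr fun n ↦ by ring)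
  linear_combination hzero

theorem summable_factorial_div_norm_risingProd (hz : 0 < z.re) :
    Summable fun k : ℕ ↦ (k ! : ℝ) / ‖risingProd z (k + 1)‖ := by
  have hshift (k : ℕ) :
      inverseFactorialTerm (fun l ↦ Pi.single (M := fun _ ↦ ℂ) 1 1 (l + 1)) z k = 0 := by
    rw [inverseFactorialTerm, stirlingTransform, Finset.sum_eq_zero, zero_div]
    intro l hl
    rw [Pi.single_eq_of_ne (by have := (Finset.mem_Icc.mp hl).1; lia), mul_zero]
  simpa [inverseFactorialTerm, stirlingTransform_single_one] using
    summable_norm_inverseFactorialTerm_of_shift (β := Pi.single 1 1) hz (by simp [hshift])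

theorem norm_inverseFactorialTerm_le {C : ℝ} {k : ℕ}
    (h : ‖stirlingTransform β (k + 1)‖ ≤ C * k !) :
    ‖inverseFactorialTerm β z k‖ ≤ C * (k ! / ‖risingProd z (k + 1)‖) := by
  rw [inverseFactorialTerm, norm_div, ← mul_div_assoc]
  gcongr

end InverseFactorialSeries

section RisingFactorial

theorem sinh_le_mul_exp (x : ℝ) : Real.sinh x ≤ x * Real.exp x := by
  have hsplit : Real.exp (-x) = Real.exp x * Real.exp (-(2 * x)) := by
    rw [← Real.exp_add]
    ring_nf
  have htangent : -(2 * x) + 1 ≤ Real.exp (-(2 * x)) := Real.add_one_le_exp _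
  rw [Real.sinh_eq, hsplit]
  nlinarith [mul_le_mul_of_nonneg_left htangent (Real.exp_pos x).le]

theorem tendsto_euler_sinh_prod (τ : ℝ) :
    Tendsto (fun n : ℕ ↦ π * τ * ∏ i ∈ range n, (1 + τ ^ 2 / ((i : ℝ) + 1) ^ 2)) atTop
      (𝓝 (Real.sinh (π * τ))) := by
  have hlim := (continuous_im.tendsto _).comp (Complex.tendsto_euler_sin_prod (τ * I))
  have hsin : (Complex.sin (π * (τ * I))).im = Real.sinh (π * τ) := by
    rw [← mul_assoc, Complex.sin_mul_I, ← ofReal_mul, ← ofReal_sinh, im_ofReal_mul, I_im,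
      mul_one]
  rw [hsin] at hlim
  refine hlim.congr fun n ↦ ?_
  have hfactor (i : ℕ) : 1 - ((τ : ℂ) * I) ^ 2 / ((i : ℂ) + 1) ^ 2 =
      ((1 + τ ^ 2 / ((i : ℝ) + 1) ^ 2 : ℝ) : ℂ) := by
    rw [mul_pow, I_sq]
    push_cast
    ring
  simp only [Function.comp_apply, hfactor, ← ofReal_prod, ← mul_assoc, ← ofReal_mul]
  rw [mul_right_comm, ← ofReal_mul, im_ofReal_mul, I_im, mul_one]

theorem prod_one_add_sq_div_sq_le_exp {τ : ℝ} (hτ : 0 ≤ τ) (k : ℕ) :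
    ∏ i ∈ range k, (1 + τ ^ 2 / ((i : ℝ) + 1) ^ 2) ≤ Real.exp (π * τ) := by
  rcases hτ.eq_or_lt with rfl | hτ
  · simp
  have hpos : 0 < π * τ := by positivity
  have hmono : Monotone fun n : ℕ ↦ π * τ * ∏ i ∈ range n, (1 + τ ^ 2 / ((i : ℝ) + 1) ^ 2) := by
    refine monotone_nat_of_le_succ fun n ↦ ?_
    rw [Finset.prod_range_succ]
    gcongr
    exact le_mul_of_one_le_right (by positivity) (le_add_of_nonneg_right (by positivity))
  exact le_of_mul_le_mul_left
    ((hmono.ge_of_tendsto (tendsto_euler_sinh_prod τ) k).trans (sinh_le_mul_exp _)) hpos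

theorem norm_add_natCast_add_one_le {u : ℂ} (hu : u.re = 0) (i : ℕ) :
    ‖u + (i + 1 : ℕ)‖ ≤ ((i : ℝ) + 1) * (1 + ‖u‖ ^ 2 / ((i : ℝ) + 1) ^ 2) := by
  have hsq : ‖u + (i + 1 : ℕ)‖ ^ 2 = ((i : ℝ) + 1) ^ 2 + ‖u‖ ^ 2 := by
    simp only [← normSq_eq_norm_sq, normSq_apply, hu, add_re, add_im, natCast_re, natCast_im]
    push_cast
    ring
  have hrhs : (((i : ℝ) + 1) * (1 + ‖u‖ ^ 2 / ((i : ℝ) + 1) ^ 2)) ^ 2 =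
      ((i : ℝ) + 1) ^ 2 + 2 * ‖u‖ ^ 2 + (‖u‖ ^ 2 / ((i : ℝ) + 1)) ^ 2 := by
    field_simp
    ring
  refine le_of_sq_le_sq ?_ (by positivity)
  rw [hsq, hrhs]
  nlinarith [sq_nonneg (‖u‖ ^ 2 / ((i : ℝ) + 1)), sq_nonneg ‖u‖]

theorem norm_stirlingTransform_pow_le {u : ℂ} (hu : u.re = 0) (k : ℕ) :
    ‖stirlingTransform (u ^ ·) (k + 1)‖ ≤ ‖u‖ * Real.exp (π * ‖u‖) * k ! := by
  have hfactorial : ∏ i ∈ range k, ((i : ℝ) + 1) = k ! := by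
    rw [← Finset.prod_range_add_one_eq_factorial]
    push_cast
    rfl
  calc ‖stirlingTransform (u ^ ·) (k + 1)‖
      = (∏ i ∈ range k, ‖u + (i + 1 : ℕ)‖) * ‖u‖ := by
        rw [stirlingTransform_pow, Finset.prod_range_succ', norm_mul, norm_prod, Nat.cast_zero,
          add_zero]
    _ ≤ (∏ i ∈ range k, ((i : ℝ) + 1) * (1 + ‖u‖ ^ 2 / ((i : ℝ) + 1) ^ 2)) * ‖u‖ := by
        gcongr with i
        exact norm_add_natCast_add_one_le hu i
    _ = k ! * (∏ i ∈ range k, (1 + ‖u‖ ^ 2 / ((i : ℝ) + 1) ^ 2)) * ‖u‖ := by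
        rw [Finset.prod_mul_distrib, hfactorial]
    _ ≤ k ! * Real.exp (π * ‖u‖) * ‖u‖ := by
        gcongr
        exact prod_one_add_sq_div_sq_le_exp (norm_nonneg u) k
    _ = ‖u‖ * Real.exp (π * ‖u‖) * k ! := by ring

end RisingFactorial

section Superposition

variable {z : ℂ}

theorem norm_inverseFactorialTerm_pow_le {u : ℂ} (hu : u.re = 0) (k : ℕ) :
    ‖inverseFactorialTerm (u ^ ·) z k‖ ≤
      ‖u‖ * Real.exp (π * ‖u‖) * (k ! / ‖risingProd z (k + 1)‖) :=
  norm_inverseFactorialTerm_le (norm_stirlingTransform_pow_le hu k)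

theorem inverseFactorialTerm_const_mul (c : ℂ) (β : ℕ → ℂ) (k : ℕ) :
    inverseFactorialTerm (fun l ↦ c * β l) z k = c * inverseFactorialTerm β z k := by
  rw [inverseFactorialTerm, stirlingTransform_const_mul, mul_div_assoc, inverseFactorialTerm]

theorem hasSum_inverseFactorialTerm_pow (hz : 0 < z.re) {u : ℂ} (hu : u.re = 0) :
    HasSum (inverseFactorialTerm (u ^ ·) z) (u / (z - u)) := by
  have hsummable : Summable (inverseFactorialTerm (u ^ ·) z) :=
    .of_norm_bounded ((summable_factorial_div_norm_risingProd hz).mul_left _)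
      (norm_inverseFactorialTerm_pow_le hu)
  have hshift (k : ℕ) : inverseFactorialTerm (fun l ↦ u ^ (l + 1)) z k =
      u * inverseFactorialTerm (u ^ ·) z k := by
    simp only [pow_succ', inverseFactorialTerm_const_mul]
  have hfunctional := tsum_inverseFactorialTerm_shift hz hsummable
    ((hsummable.mul_left u).congr fun k ↦ (hshift k).symm)
  simp only [hshift, tsum_mul_left, pow_one] at hfunctional
  have hne : z - u ≠ 0 := ne_zero_of_re_pos (by simpa [hu])
  convert hsummable.hasSum using 1
  rw [div_eq_iff hne]
  linear_combination hfunctional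

variable {Ω : Type*} [MeasurableSpace Ω] {μ : Measure Ω} {c u : Ω → ℂ}

theorem integrable_mul_pow_of_integrable_exp (hc : AEStronglyMeasurable c μ)
    (hu : AEStronglyMeasurable u μ)
    (hint : Integrable (fun x ↦ ‖c x‖ * (‖u x‖ * Real.exp (π * ‖u x‖))) μ) {l : ℕ} (hl : 1 ≤ l) :
    Integrable (fun x ↦ c x * u x ^ l) μ := by
  obtain ⟨m, rfl⟩ := Nat.exists_eq_add_of_le' hl
  refine (hint.mul_const (m ! : ℝ)).mono' (hc.mul (hu.pow _)) (.of_forall fun x ↦ ?_)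
  have hpow : ‖u x‖ ^ m ≤ m ! * Real.exp (π * ‖u x‖) := by
    have hexp := Real.pow_div_factorial_le_exp ‖u x‖ (norm_nonneg _) m
    rw [div_le_iff₀' (by positivity)] at hexp
    refine hexp.trans ?_
    gcongr
    exact le_mul_of_one_le_left (norm_nonneg _) (one_le_two.trans Real.two_le_pi)
  calc ‖c x * u x ^ (m + 1)‖ = ‖c x‖ * (‖u x‖ * ‖u x‖ ^ m) := by
        rw [norm_mul, norm_pow, pow_succ']
    _ ≤ ‖c x‖ * (‖u x‖ * (m ! * Real.exp (π * ‖u x‖))) := by gcongr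
    _ = ‖c x‖ * (‖u x‖ * Real.exp (π * ‖u x‖)) * m ! := by ring

theorem mul_inverseFactorialTerm_eq_sum (c : ℂ) (β : ℕ → ℂ) (k : ℕ) :
    c * inverseFactorialTerm β z k = ∑ l ∈ Finset.Icc 1 (k + 1),
      (stirling1Unsigned (k + 1) l : ℂ) / risingProd z (k + 1) * (c * β l) := by
  rw [inverseFactorialTerm, stirlingTransform, Finset.sum_div, Finset.mul_sum]
  exact Finset.sum_congr rfl fun l _ ↦ by ring

theorem integrable_mul_inverseFactorialTerm_pow (hc : AEStronglyMeasurable c μ)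
    (hu : AEStronglyMeasurable u μ)
    (hint : Integrable (fun x ↦ ‖c x‖ * (‖u x‖ * Real.exp (π * ‖u x‖))) μ) (k : ℕ) :
    Integrable (fun x ↦ c x * inverseFactorialTerm (u x ^ ·) z k) μ := by
  simp only [mul_inverseFactorialTerm_eq_sum]
  exact integrable_finsetSum _ fun l hl ↦
    (integrable_mul_pow_of_integrable_exp hc hu hint (Finset.mem_Icc.mp hl).1).const_mul _

theorem integral_mul_inverseFactorialTerm_pow (hc : AEStronglyMeasurable c μ)
    (hu : AEStronglyMeasurable u μ)
    (hint : Integrable (fun x ↦ ‖c x‖ * (‖u x‖ * Real.exp (π * ‖u x‖))) μ) (k : ℕ) :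
    ∫ x, c x * inverseFactorialTerm (u x ^ ·) z k ∂μ =
      inverseFactorialTerm (fun l ↦ ∫ x, c x * u x ^ l ∂μ) z k := by
  simp only [mul_inverseFactorialTerm_eq_sum]
  rw [integral_finsetSum _ fun l hl ↦
    (integrable_mul_pow_of_integrable_exp hc hu hint (Finset.mem_Icc.mp hl).1).const_mul _]
  simpa only [integral_const_mul, one_mul] using (mul_inverseFactorialTerm_eq_sum 1 _ k).symm

theorem summable_integral_norm_mul_inverseFactorialTerm_pow (hz : 0 < z.re)
    (hc : AEStronglyMeasurable c μ) (hu : AEStronglyMeasurable u μ) (hure : ∀ x, (u x).re = 0)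
    (hint : Integrable (fun x ↦ ‖c x‖ * (‖u x‖ * Real.exp (π * ‖u x‖))) μ) :
    Summable fun k ↦ ∫ x, ‖c x * inverseFactorialTerm (u x ^ ·) z k‖ ∂μ := by
  refine .of_nonneg_of_le (fun k ↦ integral_nonneg fun x ↦ norm_nonneg _) (fun k ↦ ?_)
    ((summable_factorial_div_norm_risingProd hz).mul_left
      (∫ x, ‖c x‖ * (‖u x‖ * Real.exp (π * ‖u x‖)) ∂μ))
  rw [← integral_mul_const]
  refine integral_mono (integrable_mul_inverseFactorialTerm_pow hc hu hint k).norm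
    (hint.mul_const _) fun x ↦ ?_
  rw [norm_mul, mul_assoc]
  gcongr
  exact norm_inverseFactorialTerm_pow_le (hure x) k

theorem summable_norm_inverseFactorialTerm_integral (hz : 0 < z.re)
    (hc : AEStronglyMeasurable c μ) (hu : AEStronglyMeasurable u μ) (hure : ∀ x, (u x).re = 0)
    (hint : Integrable (fun x ↦ ‖c x‖ * (‖u x‖ * Real.exp (π * ‖u x‖))) μ) :
    Summable fun k ↦ ‖inverseFactorialTerm (fun l ↦ ∫ x, c x * u x ^ l ∂μ) z k‖ := by
  refine (summable_integral_norm_mul_inverseFactorialTerm_pow hz hc hu hure hint).of_nonneg_of_le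
    (fun k ↦ norm_nonneg _) fun k ↦ ?_
  rw [← integral_mul_inverseFactorialTerm_pow hc hu hint]
  exact norm_integral_le_integral_norm _

theorem hasSum_inverseFactorialTerm_integral (hz : 0 < z.re)
    (hc : AEStronglyMeasurable c μ) (hu : AEStronglyMeasurable u μ) (hure : ∀ x, (u x).re = 0)
    (hint : Integrable (fun x ↦ ‖c x‖ * (‖u x‖ * Real.exp (π * ‖u x‖))) μ) :
    HasSum (inverseFactorialTerm (fun l ↦ ∫ x, c x * u x ^ l ∂μ) z)
      (∫ x, c x * (u x / (z - u x)) ∂μ) := by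
  have hsum := hasSum_integral_of_summable_integral_norm
    (integrable_mul_inverseFactorialTerm_pow (z := z) hc hu hint)
    (summable_integral_norm_mul_inverseFactorialTerm_pow hz hc hu hure hint)
  simpa only [integral_mul_inverseFactorialTerm_pow hc hu hint, tsum_mul_left,
    (hasSum_inverseFactorialTerm_pow hz (hure _)).tsum_eq] using hsum

theorem integrable_mul_div_sub (hz : 0 < z.re)
    (hc : AEStronglyMeasurable c μ) (hu : AEStronglyMeasurable u μ) (hure : ∀ x, (u x).re = 0)
    (hint : Integrable (fun x ↦ ‖c x‖ * (‖u x‖ * Real.exp (π * ‖u x‖))) μ) :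
    Integrable (fun x ↦ c x * (u x / (z - u x))) μ := by
  have hmeas : AEStronglyMeasurable (fun x ↦ c x * (u x / (z - u x))) μ :=
    (hc.aemeasurable.mul
      (hu.aemeasurable.div (hu.aemeasurable.const_sub z))).aestronglyMeasurable
  refine (hint.mul_const z.re⁻¹).mono' hmeas (.of_forall fun x ↦ ?_)
  have hdenom : z.re ≤ ‖z - u x‖ := by simpa [hure x] using re_le_norm (z - u x)
  have hexp : ‖u x‖ ≤ ‖u x‖ * Real.exp (π * ‖u x‖) :=
    le_mul_of_one_le_right (norm_nonneg _) (Real.one_le_exp (by positivity))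
  rw [norm_mul, norm_div, mul_assoc, ← div_eq_mul_inv]
  gcongr

end Superposition

section BernoulliGeneratingFunction

theorem bernPoly_eq_bernoulliFun (n : ℕ) (y : ℝ) : bernPoly n y = bernoulliFun n y := by
  rw [bernPoly, bernoulliFun, Polynomial.bernoulli, Polynomial.map_sum, Polynomial.eval_finsetSum]
  refine Finset.sum_congr rfl fun i _ ↦ ?_
  simp only [Polynomial.map_monomial, Polynomial.eval_monomial, map_mul, map_natCast, eq_ratCast]
  ring

theorem hasSum_fourierCoeffOn_mul_fourier {f : ℝ → ℂ} (hf : Continuous f) (hf01 : f 0 = f 1)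
    (hsum : Summable (fourierCoeffOn (zero_lt_one' ℝ) f)) {y : ℝ} (hy : y ∈ Set.Icc (0 : ℝ) 1) :
    HasSum (fun n ↦ fourierCoeffOn (zero_lt_one' ℝ) f n * fourier n (y : AddCircle (1 : ℝ)))
      (f y) := by
  obtain ⟨F, hF⟩ : ∃ F : C(AddCircle (1 : ℝ), ℂ), ⇑F = AddCircle.liftIco 1 0 f :=
    ⟨⟨_, AddCircle.liftIco_zero_continuous hf01 hf.continuousOn⟩, rfl⟩
  have hcoeff (n : ℤ) : fourierCoeff F n = fourierCoeffOn (zero_lt_one' ℝ) f n := by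
    rw [hF, fourierCoeff_liftIco_eq]
    simp only [zero_add]
  have hFIco {x : ℝ} (hx : x ∈ Set.Ico (0 : ℝ) 1) : F x = f x := by
    rw [hF]
    exact AddCircle.liftIco_coe_apply (by simpa using hx)
  have hFy : F y = f y := by
    rcases hy.2.lt_or_eq with hlt | rfl
    · exact hFIco ⟨hy.1, hlt⟩
    · rw [AddCircle.coe_period, ← QuotientAddGroup.mk_zero, hFIco (by simp), hf01]
  rw [← hFy]
  refine (has_pointwise_sum_fourier_series_of_summable (hsum.congr fun n ↦ (hcoeff n).symm)
    (y : AddCircle (1 : ℝ))).congr_fun fun n ↦ ?_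
  rw [hcoeff, smul_eq_mul]

theorem fourierCoeffOn_sub {a b : ℝ} (hab : a < b) {f g : ℝ → ℂ} (hf : Continuous f)
    (hg : Continuous g) (n : ℤ) :
    fourierCoeffOn hab (fun x ↦ f x - g x) n =
      fourierCoeffOn hab f n - fourierCoeffOn hab g n := by
  have hfourier : Continuous fun x : ℝ ↦ fourier (-n) (x : AddCircle (b - a)) :=
    (map_continuous _).comp (AddCircle.continuous_mk' _)
  simp only [fourierCoeffOn_eq_integral, smul_sub]
  rw [← smul_sub, ← intervalIntegral.integral_sub]
  · exact (hfourier.smul hf).intervalIntegrable _ _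
  · exact (hfourier.smul hg).intervalIntegrable _ _

/-- The frequencies `2πin`, which are the poles of `w ↦ 1 / (exp w - 1)`. At `n = 0` the value is
zero, so that the convention `x / 0 = 0` drops this index from series of negative powers. -/
def fourierFrequency (n : ℤ) : ℂ := 2 * π * I * n

@[simp]
theorem fourierFrequency_zero : fourierFrequency 0 = 0 := by simp [fourierFrequency]

@[simp]
theorem fourierFrequency_re (n : ℤ) : (fourierFrequency n).re = 0 := by simp [fourierFrequency]

theorem fourierFrequency_ne_zero {n : ℤ} (hn : n ≠ 0) : fourierFrequency n ≠ 0 := by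
  simp [fourierFrequency, hn]

theorem exp_fourierFrequency (n : ℤ) : exp (fourierFrequency n) = 1 := by
  rw [fourierFrequency, mul_comm, exp_int_mul_two_pi_mul_I]

theorem norm_fourierFrequency (n : ℤ) : ‖fourierFrequency n‖ = 2 * π * |(n : ℝ)| := by
  simp [fourierFrequency, abs_of_pos Real.pi_pos]

theorem summable_inv_norm_fourierFrequency_pow {N : ℕ} (hN : 2 ≤ N) :
    Summable fun n ↦ (‖fourierFrequency n‖ ^ N)⁻¹ := by
  refine ((Real.summable_one_div_int_pow.mpr hN).norm.mul_left ((2 * π) ^ N)⁻¹).congr fun n ↦ ?_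
  rw [norm_fourierFrequency, mul_pow _ |(n : ℝ)|, mul_inv]
  simp

theorem tendsto_div_fourierFrequency (w : ℂ) :
    Tendsto (fun n ↦ w / fourierFrequency n) cofinite (𝓝 0) := by
  rw [tendsto_zero_iff_norm_tendsto_zero]
  have hn : Tendsto (fun n : ℤ ↦ |(n : ℝ)|⁻¹) cofinite (𝓝 0) :=
    tendsto_inv_atTop_zero.comp (tendsto_norm_cocompact_atTop.comp Int.tendsto_coe_cofinite)
  refine ((mul_zero (‖w‖ / (2 * π)) ▸ hn.const_mul _ :)).congr fun n ↦ ?_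
  rw [norm_div, norm_fourierFrequency, ← div_eq_mul_inv, div_div]

theorem hasSum_fourier_div_fourierFrequency_pow {y : ℝ} (hy : y ∈ Set.Icc (0 : ℝ) 1) {N : ℕ}
    (hN : 2 ≤ N) :
    HasSum (fun n ↦ fourier n (y : AddCircle (1 : ℝ)) / fourierFrequency n ^ N)
      (-(bernPoly N y / N ! : ℂ)) := by
  convert! (hasSum_one_div_pow_mul_fourier_mul_bernoulliFun hN hy).mul_left
    (1 / (2 * (π : ℂ) * I) ^ N) using 1
  · ext n
    rw [fourierFrequency, mul_pow]
    simp only [div_eq_mul_inv, mul_inv]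
    ring
  · have := two_pi_I_ne_zero
    rw [bernPoly_eq_bernoulliFun]
    field_simp

/-- The generating function `w e^{wy} / (e^w - 1) = ∑ B_n(y) w^n / n!` of the Bernoulli
polynomials. -/
def bernoulliGenFun (y : ℝ) (w : ℂ) : ℂ := w * exp (w * y) / (exp w - 1)

variable {w : ℂ}

theorem ne_fourierFrequency_of_exp_ne_one (hw : exp w ≠ 1) (n : ℤ) : w ≠ fourierFrequency n :=
  fun h ↦ hw (h ▸ exp_fourierFrequency n)

theorem one_sub_div_fourierFrequency_ne_zero (hw : exp w ≠ 1) (n : ℤ) :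
    1 - w / fourierFrequency n ≠ 0 := by
  rcases eq_or_ne n 0 with rfl | hn
  · simp
  · rw [sub_ne_zero, ne_comm, Ne, div_eq_one_iff_eq (fourierFrequency_ne_zero hn)]
    exact ne_fourierFrequency_of_exp_ne_one hw n

theorem fourierCoeffOn_bernoulliGenFun (hw : exp w ≠ 1) (n : ℤ) :
    fourierCoeffOn (zero_lt_one' ℝ) (bernoulliGenFun · w) n = w / (w - fourierFrequency n) := by
  have hne : w - fourierFrequency n ≠ 0 := sub_ne_zero.mpr (ne_fourierFrequency_of_exp_ne_one hw n)
  have hexp : exp w - 1 ≠ 0 := sub_ne_zero.mpr hw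
  have hintegrand (x : ℝ) : fourier (-n) (x : AddCircle (1 - 0 : ℝ)) • bernoulliGenFun x w =
      w / (exp w - 1) * exp ((w - fourierFrequency n) * x) := by
    rw [fourier_coe_apply, smul_eq_mul, bernoulliGenFun, fourierFrequency, sub_mul, exp_sub,
      div_eq_mul_inv (exp (w * x)), ← exp_neg]
    push_cast
    ring_nf
  rw [fourierCoeffOn_eq_integral]
  simp only [hintegrand]
  rw [intervalIntegral.integral_const_mul, integral_exp_mul_complex hne]
  simp only [ofReal_one, ofReal_zero, mul_one, mul_zero, exp_zero, exp_sub, exp_fourierFrequency,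
    sub_zero, div_one, one_smul]
  field_simp

theorem fourierCoeffOn_bernoulliGenFun_sub (hw : exp w ≠ 1) (n : ℤ) :
    fourierCoeffOn (zero_lt_one' ℝ) (fun x ↦ bernoulliGenFun x w - w * bernoulliFun 1 x) n =
      w / (w - fourierFrequency n) + w / fourierFrequency n := by
  have hbernoulli : fourierCoeffOn (zero_lt_one' ℝ) (fun x ↦ w * (bernoulliFun 1 x : ℂ)) n =
      -(w / fourierFrequency n) := by
    have hcoeff := bernoulliFourierCoeff_eq one_ne_zero n
    rw [Nat.factorial_one, pow_one, Nat.cast_one, ← fourierFrequency] at hcoeff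
    rw [fourierCoeffOn.const_mul, ← bernoulliFourierCoeff, hcoeff]
    ring
  have hGcont : Continuous fun x : ℝ ↦ bernoulliGenFun x w := by
    unfold bernoulliGenFun
    fun_prop
  have hBcont : Continuous fun x : ℝ ↦ w * (bernoulliFun 1 x : ℂ) := by
    simp only [bernoulliFun_one]
    fun_prop
  rw [fourierCoeffOn_sub _ hGcont hBcont, fourierCoeffOn_bernoulliGenFun hw, hbernoulli,
    sub_neg_eq_add]

theorem div_sub_fourierFrequency_add_div (hw : exp w ≠ 1) (n : ℤ) :
    w / (w - fourierFrequency n) + w / fourierFrequency n =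
      (if n = 0 then 1 else 0) - (w / fourierFrequency n) ^ 2 / (1 - w / fourierFrequency n) := by
  rcases eq_or_ne n 0 with rfl | hn
  · have hw0 : w ≠ 0 := fun h ↦ hw (h ▸ exp_zero)
    simp [hw0]
  · have hq := fourierFrequency_ne_zero hn
    have hne : w - fourierFrequency n ≠ 0 :=
      sub_ne_zero.mpr (ne_fourierFrequency_of_exp_ne_one hw n)
    have hne' : fourierFrequency n - w ≠ 0 := by rwa [← neg_sub, neg_ne_zero]
    rw [if_neg hn, one_sub_div hq]
    field_simp
    ring

theorem summable_div_fourierFrequency_sq_div (w : ℂ) :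
    Summable fun n ↦ (w / fourierFrequency n) ^ 2 / (1 - w / fourierFrequency n) := by
  have hhalf : ∀ᶠ n in cofinite, 1 / 2 < ‖1 - w / fourierFrequency n‖ := by
    have := ((tendsto_div_fourierFrequency w).const_sub 1).norm
    simp only [sub_zero, norm_one] at this
    exact this.eventually (lt_mem_nhds one_half_lt_one)
  refine .of_norm_bounded_eventually
    ((summable_inv_norm_fourierFrequency_pow le_rfl).mul_left (2 * ‖w‖ ^ 2)) ?_
  filter_upwards [hhalf] with n hn
  rw [norm_div, norm_pow, norm_div, div_pow, div_le_iff₀ (by linarith), div_eq_mul_inv]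
  have : 0 ≤ ‖w‖ ^ 2 * (‖fourierFrequency n‖ ^ 2)⁻¹ := by positivity
  nlinarith

theorem hasSum_bernoulliGenFun_sub_linear {y : ℝ} (hy : y ∈ Set.Icc (0 : ℝ) 1)
    (hw : exp w ≠ 1) :
    HasSum (fun n ↦ -(fourier n (y : AddCircle (1 : ℝ)) *
        ((w / fourierFrequency n) ^ 2 / (1 - w / fourierFrequency n))))
      (bernoulliGenFun y w - w * bernoulliFun 1 y - 1) := by
  have hexp : exp w - 1 ≠ 0 := sub_ne_zero.mpr hw
  have hconst : HasSum (fun n : ℤ ↦ if n = 0 then (1 : ℂ) else 0) 1 := hasSum_ite_eq 0 1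
  have hcoeff (n : ℤ) := (fourierCoeffOn_bernoulliGenFun_sub hw n).trans
    (div_sub_fourierFrequency_add_div hw n)
  have hcont : Continuous fun x : ℝ ↦ bernoulliGenFun x w - w * bernoulliFun 1 x := by
    simp only [bernoulliGenFun, bernoulliFun_one]
    fun_prop
  have hperiodic : bernoulliGenFun 0 w - w * bernoulliFun 1 0 =
      bernoulliGenFun 1 w - w * bernoulliFun 1 1 := by
    simp only [bernoulliGenFun, bernoulliFun_one, ofReal_zero, ofReal_one, mul_zero, mul_one,
      exp_zero]
    field_simp
    push_cast
    ring
  have hfourier := hasSum_fourierCoeffOn_mul_fourier hcont hperiodic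
    ((hconst.summable.sub (summable_div_fourierFrequency_sq_div w)).congr fun n ↦ (hcoeff n).symm)
    hy
  refine (hfourier.sub hconst).congr_fun fun n ↦ ?_
  rw [hcoeff]
  split_ifs with hn
  · simp [hn]
  · ring

theorem hasSum_bernoulliGenFun_sub_sum {y : ℝ} (hy : y ∈ Set.Icc (0 : ℝ) 1) (hw : exp w ≠ 1)
    (a : ℕ) :
    HasSum (fun n ↦ -(fourier n (y : AddCircle (1 : ℝ)) *
        ((w / fourierFrequency n) ^ (a + 2) / (1 - w / fourierFrequency n))))
      (bernoulliGenFun y w - ∑ n ∈ range (a + 2), w ^ n * (bernPoly n y / n ! : ℂ)) := by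
  induction a with
  | zero =>
    convert! hasSum_bernoulliGenFun_sub_linear hy hw using 1
    simp only [Finset.sum_range_succ, Finset.sum_range_zero, zero_add, bernPoly_eq_bernoulliFun,
      bernoulliFun_zero, Nat.factorial_zero, Nat.factorial_one, Nat.cast_one, ofReal_one]
    ring
  | succ a ih =>
    have hcoeff := hasSum_fourier_div_fourierFrequency_pow hy (le_add_self : 2 ≤ a + 2)
    convert! ih.add (hcoeff.mul_left (w ^ (a + 2))) using 1
    · ext n
      have hne := one_sub_div_fourierFrequency_ne_zero hw n
      rw [mul_div_left_comm (w ^ (a + 2)), ← div_pow]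
      generalize w / fourierFrequency n = t at hne ⊢
      field_simp
      ring
    · rw [show a + 1 + 2 = a + 2 + 1 by ring, Finset.sum_range_succ]
      ring

end BernoulliGeneratingFunction

section LaplaceGamma

variable {s r : ℂ}

theorem mul_cpow_of_re_pos {x y : ℂ} (hx : 0 < x.re) (hy : 0 < y.re) (s : ℂ) :
    (x * y) ^ s = x ^ s * y ^ s := by
  have hx₀ := ne_zero_of_re_pos hx
  have hy₀ := ne_zero_of_re_pos hy
  have hx_arg := abs_lt.1 (abs_arg_lt_pi_div_two_iff.2 (Or.inl hx))
  have hy_arg := abs_lt.1 (abs_arg_lt_pi_div_two_iff.2 (Or.inl hy))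
  have hlog : log (x * y) = log x + log y :=
    Complex.log_mul hx₀ hy₀ ⟨by linarith [hx_arg.1, hy_arg.1], by linarith [hx_arg.2, hy_arg.2]⟩
  rw [cpow_def_of_ne_zero (mul_ne_zero hx₀ hy₀), cpow_def_of_ne_zero hx₀, cpow_def_of_ne_zero hy₀,
    hlog, add_mul, Complex.exp_add]

theorem norm_cpow_mul_exp_neg_mul (s r : ℂ) {t : ℝ} (ht : 0 < t) :
    ‖(t : ℂ) ^ s * exp (-(r * t))‖ = t ^ s.re * Real.exp (-(r.re * t)) := by
  simp [norm_cpow_eq_rpow_re_of_pos ht, norm_exp]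

theorem measurable_cpow_mul_exp_neg_mul (s r : ℂ) :
    Measurable fun t : ℝ ↦ (t : ℂ) ^ s * exp (-(r * t)) := by
  fun_prop

theorem integrableOn_rpow_mul_exp_neg_mul {σ ρ : ℝ} (hσ : -1 < σ) (hρ : 0 < ρ) :
    IntegrableOn (fun t : ℝ ↦ t ^ σ * Real.exp (-(ρ * t))) (Ioi 0) := by
  simpa using integrableOn_rpow_mul_exp_neg_mul_rpow hσ one_pos hρ

theorem integrableOn_cpow_mul_exp_neg_mul (hs : -1 < s.re) (hr : 0 < r.re) :
    IntegrableOn (fun t : ℝ ↦ (t : ℂ) ^ s * exp (-(r * t))) (Ioi 0) :=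
  (integrableOn_rpow_mul_exp_neg_mul hs hr).mono'
    (measurable_cpow_mul_exp_neg_mul s r).aestronglyMeasurable
    (ae_restrict_of_forall_mem measurableSet_Ioi fun _ ht ↦ (norm_cpow_mul_exp_neg_mul s r ht).le)

theorem differentiableAt_integral_cpow_mul_exp_neg_mul (hs : -1 < s.re) (hr : 0 < r.re) :
    DifferentiableAt ℂ (fun r : ℂ ↦ ∫ t in Ioi (0 : ℝ), (t : ℂ) ^ s * exp (-(r * t))) r := by
  have hnhds : {w : ℂ | r.re / 2 < w.re} ∈ 𝓝 r :=
    (isOpen_lt continuous_const continuous_re).mem_nhds (half_lt_self hr)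
  refine (hasDerivAt_integral_of_dominated_loc_of_deriv_le
    (F' := fun w t ↦ (t : ℂ) ^ s * (exp (-(w * t)) * -t))
    (bound := fun t ↦ t ^ (s.re + 1) * Real.exp (-(r.re / 2 * t)))
    hnhds (.of_forall fun w ↦ (measurable_cpow_mul_exp_neg_mul s w).aestronglyMeasurable)
    (integrableOn_cpow_mul_exp_neg_mul hs hr) (by fun_prop) ?_
    (integrableOn_rpow_mul_exp_neg_mul (by linarith) (by positivity))
    (.of_forall fun t w _ ↦ ?_)).2.differentiableAt
  · refine ae_restrict_of_forall_mem measurableSet_Ioi fun t (ht : 0 < t) w hw ↦ ?_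
    have hexp : Real.exp (-(w.re * t)) ≤ Real.exp (-(r.re / 2 * t)) := by
      gcongr
      exact (show r.re / 2 < w.re from hw).le
    calc ‖(t : ℂ) ^ s * (exp (-(w * t)) * -t)‖
        = t ^ s.re * Real.exp (-(w.re * t)) * t := by
          rw [← mul_assoc, norm_mul, norm_cpow_mul_exp_neg_mul s w ht, norm_neg, norm_real,
            Real.norm_of_nonneg ht.le]
      _ = t ^ (s.re + 1) * Real.exp (-(w.re * t)) := by rw [Real.rpow_add_one ht.ne']; ring
      _ ≤ _ := by gcongr
  · have hlin : HasDerivAt (fun w : ℂ ↦ -(w * t)) (-(t : ℂ)) w := by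
      simpa using ((hasDerivAt_id w).mul_const (t : ℂ)).fun_neg
    exact hlin.cexp.const_mul _

theorem tendsto_ofReal_one_add_one_div :
    Tendsto (fun n : ℕ ↦ ((1 + 1 / ((n : ℝ) + 1) : ℝ) : ℂ)) atTop (𝓝[≠] 1) := by
  refine tendsto_nhdsWithin_iff.2 ⟨?_, .of_forall fun n ↦ ?_⟩
  · simpa [Function.comp_def] using (continuous_ofReal.tendsto _).comp
      ((tendsto_one_div_add_atTop_nhds_zero_nat (𝕜 := ℝ)).const_add 1)
  · have hpos : (0 : ℝ) < 1 / ((n : ℝ) + 1) := by positivity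
    simpa only [mem_compl_iff, mem_singleton_iff, ofReal_eq_one, add_eq_left] using hpos.ne'

/- Both sides are holomorphic in `r`, and for positive real `r` the formula is a change of
variables. -/
theorem integral_cpow_mul_exp_neg_mul_Ioi_of_re_pos (hs : 0 < s.re) (hr : 0 < r.re) :
    ∫ t in Ioi (0 : ℝ), (t : ℂ) ^ (s - 1) * exp (-(r * t)) = Gamma s * r ^ (-s) := by
  have hopen : IsOpen {r : ℂ | 0 < r.re} := isOpen_lt continuous_const continuous_re
  have hlhs : DifferentiableOn ℂ
      (fun r : ℂ ↦ ∫ t in Ioi (0 : ℝ), (t : ℂ) ^ (s - 1) * exp (-(r * t))) {r | 0 < r.re} :=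
    fun w hw ↦ (differentiableAt_integral_cpow_mul_exp_neg_mul (by simpa using hs)
      hw).differentiableWithinAt
  have hrhs : DifferentiableOn ℂ (fun r : ℂ ↦ Gamma s * r ^ (-s)) {r | 0 < r.re} := fun w hw ↦
    ((differentiableAt_id.cpow (differentiableAt_const _) (Or.inl hw)).const_mul
      _).differentiableWithinAt
  refine (hlhs.analyticOnNhd hopen).eqOn_of_preconnected_of_frequently_eq
    (hrhs.analyticOnNhd hopen) (convex_halfSpace_re_gt 0).isPreconnected
    (show (1 : ℂ) ∈ {r : ℂ | 0 < r.re} by simp)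
    (tendsto_ofReal_one_add_one_div.frequently (.of_forall fun n ↦ ?_)) hr
  have hpos : 0 < 1 + 1 / ((n : ℝ) + 1) := by positivity
  rw [integral_cpow_mul_exp_neg_mul_Ioi hs hpos, one_div, inv_cpow_ofReal_nonneg hpos.le,
    cpow_neg, mul_comm]

theorem Gamma_add_natCast_eq_cchoose_mul (hs : 0 < s.re) (n : ℕ) :
    Gamma (s + n) = (-1) ^ n * cchoose (-s) n * n ! * Gamma s := by
  have hfactorial (m : ℕ) : cchoose (-s) m * m ! = ∏ i ∈ range m, (-s - i) :=
    div_mul_cancel₀ _ (mod_cast m.factorial_ne_zero)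
  rw [mul_assoc ((-1) ^ n), hfactorial]
  induction n with
  | zero => simp
  | succ n ih =>
    have hne : s + n ≠ 0 := fun h ↦
      (by positivity : 0 < s.re + n).ne' (by simpa using congrArg re h)
    rw [Nat.cast_succ, ← add_assoc, Gamma_add_one _ hne, ih, Finset.prod_range_succ]
    ring

end LaplaceGamma

section HurwitzMellin

variable {s z w : ℂ} {y : ℝ}

theorem exp_ne_one_of_re_pos (hw : 0 < w.re) : exp w ≠ 1 := fun h ↦
  (Real.one_lt_exp_iff.2 hw).ne' (by rw [← norm_exp, h, norm_one])

theorem re_ofReal_div (v : ℝ) (z : ℂ) : (v / z : ℂ).re = v * z.re / normSq z := by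
  simp [div_re]

theorem re_ofReal_div_pos {v : ℝ} (hv : 0 < v) (hz : 0 < z.re) : 0 < (v / z : ℂ).re := by
  have hz₀ := ne_zero_of_re_pos hz
  have := normSq_pos.2 hz₀
  rw [re_ofReal_div]
  positivity

theorem hasSum_bernoulliGenFun (y : ℝ) (hw : 0 < w.re) :
    HasSum (fun k : ℕ ↦ w * exp (-((k + 1 - y) * w))) (bernoulliGenFun y w) := by
  have hnorm : ‖exp (-w)‖ < 1 := by simpa [norm_exp] using hw
  have hne : exp w - 1 ≠ 0 := sub_ne_zero.2 (exp_ne_one_of_re_pos hw)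
  convert! (hasSum_geometric_of_norm_lt_one hnorm).mul_left (w * exp (-((1 - y) * w))) using 1
  · ext k
    rw [← Complex.exp_nat_mul, mul_assoc, ← Complex.exp_add]
    ring_nf
  · have hsplit : exp (-((1 - y) * w)) = exp (w * y) * exp (-w) := by
      rw [← Complex.exp_add]
      ring_nf
    have hinv : exp (-w) * exp w = 1 := by rw [← Complex.exp_add, neg_add_cancel, Complex.exp_zero]
    have hne' : 1 - exp (-w) ≠ 0 := fun h ↦ hne (by linear_combination exp w * h + hinv)
    rw [bernoulliGenFun, hsplit]
    field_simp
    linear_combination (-w) * hinv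

theorem re_hurwitz_div (k : ℕ) (hz : z ≠ 0) :
    ((k + z + 1 - y) / z).re = 1 + (k + (1 - y)) * (z.re / normSq z) := by
  have hsplit : (k + z + 1 - y) / z = 1 + ((k + (1 - y) : ℝ) : ℂ) / z := by
    push_cast
    field_simp
    ring
  rw [hsplit, add_re, one_re, re_ofReal_div, mul_div_assoc]

theorem summable_inv_re_hurwitz_div_rpow (hy : y ≤ 1) (hz : 0 < z.re) {σ : ℝ} (hσ : 1 < σ) :
    Summable fun k : ℕ ↦ (1 / ((k + z + 1 - y) / z).re) ^ σ := by
  have hz₀ := ne_zero_of_re_pos hz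
  have hρ : 0 < z.re / normSq z := div_pos hz (normSq_pos.2 hz₀)
  have hseries := ((Real.summable_one_div_nat_add_rpow
    ((1 - y) + (z.re / normSq z)⁻¹) σ).2 hσ).mul_left ((1 / (z.re / normSq z)) ^ σ)
  refine hseries.congr fun k ↦ ?_
  have hpos : 0 < k + ((1 - y) + (z.re / normSq z)⁻¹) := by
    have := sub_nonneg.2 hy
    positivity
  rw [abs_of_pos hpos, one_div (_ ^ σ), ← Real.inv_rpow hpos.le,
    ← Real.mul_rpow (by positivity) (by positivity), re_hurwitz_div k hz₀, one_div,
    ← mul_inv, ← one_div]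
  congr 2
  rw [mul_add, mul_add, mul_inv_cancel₀ hρ.ne']
  ring

theorem re_hurwitz_div_pos (hy : y ≤ 1) (hz : 0 < z.re) (k : ℕ) :
    0 < ((k + z + 1 - y) / z).re := by
  have hz₀ := ne_zero_of_re_pos hz
  have := sub_nonneg.2 hy
  have := normSq_pos.2 hz₀
  rw [re_hurwitz_div k hz₀]
  positivity

theorem hurwitz_div_cpow_neg (hy : y ≤ 1) (hz : 0 < z.re) (s : ℂ) (k : ℕ) :
    ((k + z + 1 - y) / z) ^ (-s) = z ^ s * (k + z + 1 - y) ^ (-s) := by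
  have hz₀ := ne_zero_of_re_pos hz
  have hmul := mul_cpow_of_re_pos (re_hurwitz_div_pos hy hz k) hz (-s)
  rw [div_mul_cancel₀ _ hz₀] at hmul
  rw [hmul, mul_left_comm, ← cpow_add _ _ hz₀, add_neg_cancel, cpow_zero, mul_one]

theorem hasSum_cpow_mul_exp_neg_mul_bernoulliGenFun (s : ℂ) (y : ℝ) (hz : 0 < z.re) {v : ℝ}
    (hv : 0 < v) :
    HasSum (fun k : ℕ ↦ z⁻¹ * ((v : ℂ) ^ (s - 1) * exp (-((k + z + 1 - y) / z * v))))
      ((v : ℂ) ^ (s - 1 - 1) * exp (-v) * bernoulliGenFun y (v / z)) := by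
  have hz₀ := ne_zero_of_re_pos hz
  have hv₀ : (v : ℂ) ≠ 0 := mod_cast hv.ne'
  convert! (hasSum_bernoulliGenFun y (re_ofReal_div_pos hv hz)).mul_left
    ((v : ℂ) ^ (s - 1 - 1) * exp (-v)) using 1
  ext k
  have hexp : exp (-((k + z + 1 - y) / z * v)) = exp (-v) * exp (-((k + 1 - y) * (v / z))) := by
    rw [← Complex.exp_add]
    congr 1
    field_simp
    ring
  rw [hexp, cpow_sub (s - 1) 1 hv₀, cpow_one]
  field_simp

theorem integral_cpow_mul_exp_neg_mul_bernoulliGenFun (hs : 1 < s.re) (hy : y ≤ 1)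
    (hz : 0 < z.re) :
    ∫ v in Ioi (0 : ℝ), (v : ℂ) ^ (s - 1 - 1) * exp (-v) * bernoulliGenFun y (v / z) =
      Gamma s * z ^ (s - 1) * ∑' k : ℕ, ((k : ℂ) + z + 1 - y) ^ (-s) := by
  have hz₀ := ne_zero_of_re_pos hz
  have hint (k : ℕ) := (integrableOn_cpow_mul_exp_neg_mul (s := s - 1) (by simpa using by linarith)
    (re_hurwitz_div_pos hy hz k)).const_mul z⁻¹
  have hnorm (k : ℕ) :
      ∫ v in Ioi (0 : ℝ), ‖z⁻¹ * ((v : ℂ) ^ (s - 1) * exp (-((k + z + 1 - y) / z * v)))‖ =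
        ‖z⁻¹‖ * ((1 / ((k + z + 1 - y) / z).re) ^ s.re * Real.Gamma s.re) := by
    rw [← Real.integral_rpow_mul_exp_neg_mul_Ioi (by linarith) (re_hurwitz_div_pos hy hz k),
      ← integral_const_mul]
    refine setIntegral_congr_fun measurableSet_Ioi fun v hv ↦ ?_
    simp only [norm_mul z⁻¹, norm_cpow_mul_exp_neg_mul _ _ (mem_Ioi.1 hv), sub_re, one_re]
  have hsum := hasSum_integral_of_summable_integral_norm hint <| by
    simp only [hnorm]
    exact ((summable_inv_re_hurwitz_div_rpow hy hz hs).mul_right _).mul_left _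
  rw [setIntegral_congr_fun measurableSet_Ioi fun v hv ↦
    (hasSum_cpow_mul_exp_neg_mul_bernoulliGenFun s y hz hv).tsum_eq] at hsum
  rw [← hsum.tsum_eq, ← tsum_mul_left]
  refine tsum_congr fun k ↦ ?_
  rw [integral_const_mul, integral_cpow_mul_exp_neg_mul_Ioi_of_re_pos (by linarith)
    (re_hurwitz_div_pos hy hz k), hurwitz_div_cpow_neg hy hz, cpow_sub _ _ hz₀, cpow_one]
  ring

end HurwitzMellin

section Remainder

variable {s z : ℂ} {y : ℝ} {a : ℕ}

theorem integral_count_of_summable {ι : Type*} [Countable ι] [MeasurableSpace ι]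
    [MeasurableSingletonClass ι] {f : ι → ℂ} (hf : Summable f) :
    ∫ i, f i ∂Measure.count = ∑' i, f i := by
  rw [integral_countable (integrable_count_iff.2 hf.norm)]
  simp

theorem integral_cpow_mul_exp_neg (hs : 0 < s.re) :
    ∫ v in Ioi (0 : ℝ), (v : ℂ) ^ (s - 1) * exp (-v) = Gamma s := by
  simpa using integral_cpow_mul_exp_neg_mul_Ioi_of_re_pos hs (r := 1) (by simp)

theorem integrableOn_cpow_mul_exp_neg (hs : 0 < s.re) :
    IntegrableOn (fun v : ℝ ↦ (v : ℂ) ^ (s - 1) * exp (-v)) (Ioi 0) := by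
  simpa using integrableOn_cpow_mul_exp_neg_mul (s := s - 1) (r := 1) (by simpa using hs) (by simp)

theorem cpow_add_natCast_sub_one (s : ℂ) (n : ℕ) {v : ℝ} (hv : 0 < v) :
    (v : ℂ) ^ (s + n - 1) = (v : ℂ) ^ (s - 1) * (v : ℂ) ^ n := by
  rw [add_sub_right_comm, cpow_add _ _ (mod_cast hv.ne'), cpow_natCast]

/-- Frequencies times the half-line: the parameter space over which the remainder of the Bernoulli
generating function is a superposition of the geometric kernels `u / (z - u)`. -/
def remainderMeasure : Measure (ℤ × ℝ) :=
  Measure.count.prod (volume.restrict (Ioi 0))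

/-- The geometric ratio `v / (2πin)` attached to a point `(n, v)` of the parameter space; it is
`0` at the frequency `n = 0`, which therefore contributes nothing. -/
def remainderRatio (p : ℤ × ℝ) : ℂ := p.2 / fourierFrequency p.1

/-- The complex weight against which the powers of `remainderRatio` are integrated: a Fourier mode
in `y` times a Gamma density in `v`. -/
def remainderWeight (s : ℂ) (y : ℝ) (a : ℕ) (p : ℤ × ℝ) : ℂ :=
  -(fourier p.1 (y : AddCircle (1 : ℝ)) / fourierFrequency p.1 ^ a) *
    ((p.2 : ℂ) ^ (s + a - 1) * exp (-p.2))

theorem ae_remainderMeasure_snd_pos : ∀ᵐ p ∂remainderMeasure, 0 < p.2 :=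
  Measure.quasiMeasurePreserving_snd.ae (ae_restrict_mem measurableSet_Ioi)

theorem measurable_remainderRatio : Measurable remainderRatio :=
  (measurable_ofReal.comp measurable_snd).div
    ((measurable_of_countable fourierFrequency).comp measurable_fst)

theorem measurable_remainderWeight (s : ℂ) (y : ℝ) (a : ℕ) :
    Measurable (remainderWeight s y a) := by
  have hfreq : Measurable fun n : ℤ ↦
    -(fourier n (y : AddCircle (1 : ℝ)) / fourierFrequency n ^ a) := measurable_of_countable _
  have hdensity : Measurable fun v : ℝ ↦ (v : ℂ) ^ (s + a - 1) * exp (-v) := by fun_prop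
  exact (hfreq.comp measurable_fst).mul (hdensity.comp measurable_snd)

theorem remainderRatio_re (p : ℤ × ℝ) : (remainderRatio p).re = 0 := by
  simp [remainderRatio, div_re]

theorem pi_mul_norm_remainderRatio_le {p : ℤ × ℝ} (hp : 0 < p.2) :
    π * ‖remainderRatio p‖ ≤ p.2 / 2 := by
  obtain hn | hn := eq_or_ne p.1 0
  · simpa [remainderRatio, hn] using (half_pos hp).le
  · have habs : (1 : ℝ) ≤ |(p.1 : ℝ)| := mod_cast Int.one_le_abs hn
    have hinv : |(p.1 : ℝ)|⁻¹ ≤ 1 := inv_le_one_of_one_le₀ habs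
    calc π * ‖remainderRatio p‖ = p.2 / 2 * |(p.1 : ℝ)|⁻¹ := by
          rw [remainderRatio, norm_div, norm_real, Real.norm_of_nonneg hp.le, norm_fourierFrequency]
          field_simp
      _ ≤ p.2 / 2 := mul_le_of_le_one_right (by positivity) hinv

theorem norm_remainderWeight_mul_norm_remainderRatio {p : ℤ × ℝ} (hp : 0 < p.2) :
    ‖remainderWeight s y a p‖ * ‖remainderRatio p‖ =
      (‖fourierFrequency p.1‖ ^ (a + 1))⁻¹ * (p.2 ^ (s.re + a) * Real.exp (-p.2)) := by
  have hmode : ‖fourier p.1 (y : AddCircle (1 : ℝ))‖ = 1 := Circle.norm_coe _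
  have hdensity := norm_cpow_mul_exp_neg_mul (s + a - 1) 1 hp
  rw [one_mul, one_re, one_mul] at hdensity
  have hpow : p.2 ^ (s.re + a) = p.2 ^ (s + a - 1).re * p.2 := by
    rw [← Real.rpow_add_one hp.ne']
    simp
  rw [remainderWeight, remainderRatio, norm_mul, hdensity, norm_neg, norm_div, hmode, norm_pow,
    norm_div, norm_real, Real.norm_of_nonneg hp.le, hpow, pow_succ, mul_inv]
  ring

theorem integrable_remainderWeight_exp (hs : 0 < s.re) (ha : 1 ≤ a) :
    Integrable (fun p ↦ ‖remainderWeight s y a p‖ *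
      (‖remainderRatio p‖ * Real.exp (π * ‖remainderRatio p‖))) remainderMeasure := by
  have hdensity : IntegrableOn (fun v : ℝ ↦ v ^ (s.re + a) * Real.exp (-(1 / 2 * v))) (Ioi 0) :=
    integrableOn_rpow_mul_exp_neg_mul (by linarith [a.cast_nonneg (α := ℝ)]) (by norm_num)
  have hfreq : Integrable (fun n : ℤ ↦ (‖fourierFrequency n‖ ^ (a + 1))⁻¹) Measure.count :=
    integrable_count_iff.2 (summable_inv_norm_fourierFrequency_pow (by lia)).norm
  have hmeas : Measurable fun p ↦ ‖remainderWeight s y a p‖ *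
      (‖remainderRatio p‖ * Real.exp (π * ‖remainderRatio p‖)) := by
    have := measurable_remainderRatio
    have := measurable_remainderWeight s y a
    fun_prop
  refine (hfreq.mul_prod hdensity).mono' hmeas.aestronglyMeasurable ?_
  filter_upwards [ae_remainderMeasure_snd_pos] with p hp
  have hexp : Real.exp (π * ‖remainderRatio p‖) ≤ Real.exp (p.2 / 2) :=
    Real.exp_le_exp.2 (pi_mul_norm_remainderRatio_le hp)
  rw [Real.norm_of_nonneg (by positivity), ← mul_assoc,
    norm_remainderWeight_mul_norm_remainderRatio hp, mul_assoc, mul_assoc]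
  gcongr
  calc Real.exp (-p.2) * Real.exp (π * ‖remainderRatio p‖)
      ≤ Real.exp (-p.2) * Real.exp (p.2 / 2) := by gcongr
    _ = Real.exp (-(1 / 2 * p.2)) := by
      rw [← Real.exp_add]
      ring_nf

/-- The integral of `v ^ (s - 1) * exp (-v)` against the `n`-th Taylor term
`B_n(y) / n! * v ^ n` of the Bernoulli generating function. -/
def bernoulliGammaMoment (s : ℂ) (y : ℝ) (n : ℕ) : ℂ :=
  Gamma (s + n) * (bernPoly n y / n !)

theorem integral_remainderWeight_mul_pow (hs : 0 < s.re) (hy : y ∈ Set.Icc (0 : ℝ) 1) {l : ℕ}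
    (hla : 2 ≤ l + a) :
    ∫ p, remainderWeight s y a p * remainderRatio p ^ l ∂remainderMeasure =
      bernoulliGammaMoment s y (l + a) := by
  have hsum := (hasSum_fourier_div_fourierFrequency_pow hy hla).neg
  have hs' : 0 < (s + (l + a : ℕ)).re := by simpa using by positivity
  have hfactor : (fun p ↦ remainderWeight s y a p * remainderRatio p ^ l) =ᵐ[remainderMeasure]
      fun p ↦ -(fourier p.1 (y : AddCircle (1 : ℝ)) / fourierFrequency p.1 ^ (l + a)) *
        ((p.2 : ℂ) ^ (s + (l + a : ℕ) - 1) * exp (-p.2)) := by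
    filter_upwards [ae_remainderMeasure_snd_pos] with p hp
    rw [remainderWeight, remainderRatio, cpow_add_natCast_sub_one _ _ hp,
      cpow_add_natCast_sub_one _ _ hp, div_pow, pow_add, pow_add]
    ring
  rw [integral_congr_ae hfactor, remainderMeasure,
    integral_prod_mul (fun n : ℤ ↦ -(fourier n (y : AddCircle (1 : ℝ)) /
      fourierFrequency n ^ (l + a))) fun v : ℝ ↦ (v : ℂ) ^ (s + (l + a : ℕ) - 1) * exp (-v),
    integral_count_of_summable hsum.summable, hsum.tsum_eq, integral_cpow_mul_exp_neg hs',
    neg_neg, mul_comm, bernoulliGammaMoment]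

/-- The integrand `v ^ (s - 1) * exp (-v) * G (v / z)` with the Taylor terms of the Bernoulli
generating function `G` up to order `a` removed. -/
def remainderIntegrand (s z : ℂ) (y : ℝ) (a : ℕ) (v : ℝ) : ℂ :=
  (v : ℂ) ^ (s - 1) * exp (-v) *
    (bernoulliGenFun y (v / z) - ∑ n ∈ range (a + 1), (v / z : ℂ) ^ n * (bernPoly n y / n ! : ℂ))

theorem hasSum_remainderWeight_mul_div_sub (hz : 0 < z.re) (hy : y ∈ Set.Icc (0 : ℝ) 1)
    (ha : 1 ≤ a) {v : ℝ} (hv : 0 < v) :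
    HasSum (fun n : ℤ ↦ remainderWeight s y a (n, v) *
      (remainderRatio (n, v) / (z - remainderRatio (n, v))))
      (z ^ a * remainderIntegrand s z y a v) := by
  obtain ⟨b, rfl⟩ := Nat.exists_eq_add_of_le' ha
  have hz₀ := ne_zero_of_re_pos hz
  have hw := exp_ne_one_of_re_pos (re_ofReal_div_pos hv hz)
  have hsum := (hasSum_bernoulliGenFun_sub_sum hy hw b).mul_left
    (z ^ (b + 1) * ((v : ℂ) ^ (s - 1) * exp (-v)))
  rw [mul_assoc] at hsum
  convert! hsum using 1
  ext n
  obtain rfl | hn := eq_or_ne n 0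
  · simp [remainderRatio]
  have hq := fourierFrequency_ne_zero hn
  have hdenom := one_sub_div_fourierFrequency_ne_zero hw n
  have hscale : z - v / fourierFrequency n = z * (1 - v / z / fourierFrequency n) := by field_simp
  rw [remainderWeight, remainderRatio, cpow_add_natCast_sub_one _ _ hv, hscale]
  generalize 1 - v / z / fourierFrequency n = d at hdenom
  rw [div_pow, div_pow]
  field_simp
  ring

theorem integrable_remainderWeight_mul_div_sub (hs : 0 < s.re) (hz : 0 < z.re) (ha : 1 ≤ a) :
    Integrable (fun p ↦ remainderWeight s y a p * (remainderRatio p / (z - remainderRatio p)))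
      remainderMeasure :=
  integrable_mul_div_sub hz (measurable_remainderWeight s y a).aestronglyMeasurable
    measurable_remainderRatio.aestronglyMeasurable remainderRatio_re
    (integrable_remainderWeight_exp hs ha)

theorem integral_remainderWeight_count (hz : 0 < z.re) (hy : y ∈ Set.Icc (0 : ℝ) 1) (ha : 1 ≤ a)
    {v : ℝ} (hv : 0 < v) :
    ∫ n : ℤ, remainderWeight s y a (n, v) *
      (remainderRatio (n, v) / (z - remainderRatio (n, v))) ∂Measure.count =
        z ^ a * remainderIntegrand s z y a v := by
  have hsum := hasSum_remainderWeight_mul_div_sub (s := s) hz hy ha hv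
  rw [integral_count_of_summable hsum.summable, hsum.tsum_eq]

theorem integral_remainderWeight_mul_div_sub (hs : 0 < s.re) (hz : 0 < z.re)
    (hy : y ∈ Set.Icc (0 : ℝ) 1) (ha : 1 ≤ a) :
    ∫ p, remainderWeight s y a p * (remainderRatio p / (z - remainderRatio p)) ∂remainderMeasure =
      z ^ a * ∫ v in Ioi (0 : ℝ), remainderIntegrand s z y a v := by
  have hint := integrable_remainderWeight_mul_div_sub (y := y) hs hz ha
  rw [remainderMeasure] at hint ⊢
  rw [integral_prod_symm _ hint, ← integral_const_mul]
  exact setIntegral_congr_fun measurableSet_Ioi fun v hv ↦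
    integral_remainderWeight_count hz hy ha hv

theorem integrableOn_remainderIntegrand (hs : 0 < s.re) (hz : 0 < z.re)
    (hy : y ∈ Set.Icc (0 : ℝ) 1) (ha : 1 ≤ a) :
    IntegrableOn (remainderIntegrand s z y a) (Ioi 0) := by
  have hscaled : IntegrableOn (fun v ↦ z ^ a * remainderIntegrand s z y a v) (Ioi 0) :=
    (integrable_remainderWeight_mul_div_sub hs hz ha).integral_prod_right.congr
      (ae_restrict_of_forall_mem measurableSet_Ioi fun v hv ↦
        integral_remainderWeight_count hz hy ha hv)
  exact (integrable_const_mul_iff (pow_ne_zero a (ne_zero_of_re_pos hz)).isUnit _).1 hscaled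

theorem integral_remainderIntegrand (hs : 0 < s.re) (hz : 0 < z.re)
    (hy : y ∈ Set.Icc (0 : ℝ) 1) (ha : 1 ≤ a) :
    ∫ v in Ioi (0 : ℝ), remainderIntegrand s z y a v =
      (∫ v in Ioi (0 : ℝ), (v : ℂ) ^ (s - 1) * exp (-v) * bernoulliGenFun y (v / z)) -
        ∑ n ∈ range (a + 1), bernoulliGammaMoment s y n / z ^ n := by
  have hre (n : ℕ) : 0 < (s + n).re := by simpa using by positivity
  have hterm_int (n : ℕ) := (integrableOn_cpow_mul_exp_neg (hre n)).const_mul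
    ((bernPoly n y / n ! : ℂ) / z ^ n)
  have hterm (n : ℕ) : ∫ v in Ioi (0 : ℝ), (bernPoly n y / n ! : ℂ) / z ^ n *
      ((v : ℂ) ^ (s + n - 1) * exp (-v)) = bernoulliGammaMoment s y n / z ^ n := by
    rw [integral_const_mul, integral_cpow_mul_exp_neg (hre n), bernoulliGammaMoment]
    ring
  rw [eq_sub_iff_add_eq, ← Finset.sum_congr rfl fun n _ ↦ hterm n,
    ← integral_finsetSum _ fun n _ ↦ hterm_int n,
    ← integral_add (integrableOn_remainderIntegrand hs hz hy ha)
      (integrable_finsetSum _ fun n _ ↦ hterm_int n)]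
  refine setIntegral_congr_fun measurableSet_Ioi fun v hv ↦ ?_
  have htaylor : ∑ n ∈ range (a + 1), (bernPoly n y / n ! : ℂ) / z ^ n *
      ((v : ℂ) ^ (s + n - 1) * exp (-v)) = (v : ℂ) ^ (s - 1) * exp (-v) *
        ∑ n ∈ range (a + 1), (v / z : ℂ) ^ n * (bernPoly n y / n ! : ℂ) := by
    rw [Finset.mul_sum]
    refine Finset.sum_congr rfl fun n _ ↦ ?_
    rw [cpow_add_natCast_sub_one _ _ hv, div_pow]
    ring
  simp only [remainderIntegrand, htaylor]
  ring

theorem inverseFactorialTerm_bernoulliGammaMoment (hs : 0 < s.re) (hy : y ∈ Set.Icc (0 : ℝ) 1)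
    (ha : 1 ≤ a) (z : ℂ) :
    inverseFactorialTerm (fun l ↦ bernoulliGammaMoment s y (l + a)) z = inverseFactorialTerm
      (fun l ↦ ∫ p, remainderWeight s y a p * remainderRatio p ^ l ∂remainderMeasure) z := by
  ext k
  refine congrArg (· / _) (Finset.sum_congr rfl fun l hl ↦ ?_)
  have hl := (Finset.mem_Icc.1 hl).1
  exact congrArg _ (integral_remainderWeight_mul_pow hs hy (by lia)).symm

theorem summable_norm_inverseFactorialTerm_bernoulliGammaMoment (hs : 0 < s.re) (hz : 0 < z.re)
    (hy : y ∈ Set.Icc (0 : ℝ) 1) (ha : 1 ≤ a) :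
    Summable fun k ↦ ‖inverseFactorialTerm (fun l ↦ bernoulliGammaMoment s y (l + a)) z k‖ := by
  rw [inverseFactorialTerm_bernoulliGammaMoment hs hy ha]
  exact summable_norm_inverseFactorialTerm_integral hz
    (measurable_remainderWeight s y a).aestronglyMeasurable
    measurable_remainderRatio.aestronglyMeasurable remainderRatio_re
    (integrable_remainderWeight_exp hs ha)

theorem hasSum_inverseFactorialTerm_bernoulliGammaMoment (hs : 0 < s.re) (hz : 0 < z.re)
    (hy : y ∈ Set.Icc (0 : ℝ) 1) (ha : 1 ≤ a) :
    HasSum (inverseFactorialTerm (fun l ↦ bernoulliGammaMoment s y (l + a)) z)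
      (z ^ a * ((∫ v in Ioi (0 : ℝ), (v : ℂ) ^ (s - 1) * exp (-v) * bernoulliGenFun y (v / z)) -
        ∑ n ∈ range (a + 1), bernoulliGammaMoment s y n / z ^ n)) := by
  rw [inverseFactorialTerm_bernoulliGammaMoment hs hy ha, ← integral_remainderIntegrand hs hz hy ha,
    ← integral_remainderWeight_mul_div_sub hs hz hy ha]
  exact hasSum_inverseFactorialTerm_integral hz
    (measurable_remainderWeight s y a).aestronglyMeasurable
    measurable_remainderRatio.aestronglyMeasurable remainderRatio_re
    (integrable_remainderWeight_exp hs ha)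

end Remainder

section HurwitzExpansion

variable {s z : ℂ} {y : ℝ}

/-- The coefficient `(-1) ^ n C(1 - s, n) B_n(y)` of `z ^ (-n)` in the asymptotic expansion of
`(s - 1) z ^ (s - 1) ∑ (k + z + 1 - y) ^ (-s)`. -/
def hurwitzCoeff (s : ℂ) (y : ℝ) (n : ℕ) : ℂ :=
  (-1) ^ n * cchoose (1 - s) n * bernPoly n y

theorem bernoulliGammaMoment_sub_one (hs : 1 < s.re) (y : ℝ) (n : ℕ) :
    bernoulliGammaMoment (s - 1) y n = Gamma (s - 1) * hurwitzCoeff s y n := by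
  have hfactorial : (n ! : ℂ) ≠ 0 := mod_cast n.factorial_ne_zero
  rw [bernoulliGammaMoment, hurwitzCoeff, Gamma_add_natCast_eq_cchoose_mul (by simpa using hs),
    neg_sub]
  field_simp

theorem Gamma_sub_one_ne_zero (hs : 1 < s.re) : Gamma (s - 1) ≠ 0 :=
  Gamma_ne_zero_of_re_pos (by simpa using hs)

theorem summable_norm_inverseFactorialTerm_hurwitzCoeff (hs : 1 < s.re) (hz : 0 < z.re)
    (hy : y ∈ Set.Icc (0 : ℝ) 1) (a : ℕ) :
    Summable fun k ↦ ‖inverseFactorialTerm (fun l ↦ hurwitzCoeff s y (l + a)) z k‖ := by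
  have hpos {b : ℕ} (hb : 1 ≤ b) :
      Summable fun k ↦ ‖inverseFactorialTerm (fun l ↦ hurwitzCoeff s y (l + b)) z k‖ := by
    have hmoment := summable_norm_inverseFactorialTerm_bernoulliGammaMoment (s := s - 1)
      (by simpa using hs) hz hy hb
    simp only [bernoulliGammaMoment_sub_one hs, inverseFactorialTerm_const_mul, norm_mul] at hmoment
    exact (summable_mul_left_iff (norm_ne_zero_iff.2 (Gamma_sub_one_ne_zero hs))).1 hmoment
  obtain rfl | ha := a.eq_zero_or_pos
  · exact summable_norm_inverseFactorialTerm_of_shift hz (hpos le_rfl)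
  · exact hpos ha

theorem tsum_inverseFactorialTerm_hurwitzCoeff_of_one_le (hs : 1 < s.re) (hz : 0 < z.re)
    (hy : y ∈ Set.Icc (0 : ℝ) 1) {a : ℕ} (ha : 1 ≤ a) :
    ∑' k, inverseFactorialTerm (fun l ↦ hurwitzCoeff s y (l + a)) z k =
      z ^ a * ((s - 1) * z ^ (s - 1) * (∑' k : ℕ, ((k : ℂ) + z + 1 - y) ^ (-s)) -
        ∑ n ∈ range (a + 1), hurwitzCoeff s y n / z ^ n) := by
  have hre : 0 < (s - 1).re := by simpa using hs
  have hGamma : Gamma s = (s - 1) * Gamma (s - 1) := by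
    simpa using Gamma_add_one (s - 1) (ne_zero_of_re_pos hre)
  have hmoment := (hasSum_inverseFactorialTerm_bernoulliGammaMoment hre hz hy ha).tsum_eq
  simp only [bernoulliGammaMoment_sub_one hs, inverseFactorialTerm_const_mul, tsum_mul_left,
    integral_cpow_mul_exp_neg_mul_bernoulliGenFun hs hy.2 hz, mul_div_assoc, ← Finset.mul_sum,
    hGamma] at hmoment
  apply mul_left_cancel₀ (Gamma_sub_one_ne_zero hs)
  rw [hmoment]
  ring

theorem tsum_inverseFactorialTerm_hurwitzCoeff (hs : 1 < s.re) (hz : 0 < z.re)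
    (hy : y ∈ Set.Icc (0 : ℝ) 1) (a : ℕ) :
    ∑' k, inverseFactorialTerm (fun l ↦ hurwitzCoeff s y (l + a)) z k =
      z ^ a * ((s - 1) * z ^ (s - 1) * (∑' k : ℕ, ((k : ℂ) + z + 1 - y) ^ (-s)) -
        ∑ n ∈ range (a + 1), hurwitzCoeff s y n / z ^ n) := by
  obtain rfl | ha := a.eq_zero_or_pos
  · have hz₀ := ne_zero_of_re_pos hz
    have hsummable (b : ℕ) :=
      (summable_norm_inverseFactorialTerm_hurwitzCoeff hs hz hy b).of_norm
    have hshift := tsum_inverseFactorialTerm_shift hz (hsummable 0) (hsummable 1)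
    rw [tsum_inverseFactorialTerm_hurwitzCoeff_of_one_le hs hz hy le_rfl,
      Finset.sum_range_succ] at hshift
    have hcancel : z * (hurwitzCoeff s y 1 / z) = hurwitzCoeff s y 1 := mul_div_cancel₀ _ hz₀
    apply mul_left_cancel₀ hz₀
    linear_combination -hcancel - hshift
  · exact tsum_inverseFactorialTerm_hurwitzCoeff_of_one_le hs hz hy ha

theorem sum_range_hurwitzCoeff_div_pow (s z : ℂ) (y : ℝ) (a : ℕ) :
    ∑ n ∈ range (a + 1), hurwitzCoeff s y n / z ^ n =
      1 + ∑ k ∈ Finset.Icc 1 a, (-1 : ℂ) ^ k * cchoose (1 - s) k * bernPoly k y / z ^ k := by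
  rw [Finset.range_eq_Ico, Finset.sum_eq_sum_Ico_succ_bot (by lia)]
  congr 1
  simp [hurwitzCoeff, cchoose, bernPoly]

theorem hurwitzSummand_eq_inverseFactorialTerm (s : ℂ) (y : ℝ) (a : ℕ) (z : ℂ) (k : ℕ) :
    (-1 : ℂ) ^ (k + 1 + a) * (∑ l ∈ Finset.Icc 1 (k + 1),
        cchoose (1 - s) (l + a) * (S1 (k + 1) l : ℂ) * (bernPoly (l + a) y : ℂ)) /
      risingProd z (k + 1) = inverseFactorialTerm (fun l ↦ hurwitzCoeff s y (l + a)) z k := by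
  rw [inverseFactorialTerm, stirlingTransform, Finset.mul_sum]
  refine congrArg (· / _) (Finset.sum_congr rfl fun l _ ↦ ?_)
  have hsign : (-1 : ℂ) ^ (k + 1 + a) * (-1) ^ (k + 1 + l) = (-1) ^ (l + a) := by
    rw [← pow_add, show k + 1 + a + (k + 1 + l) = 2 * (k + 1) + (l + a) by ring, pow_add, pow_mul]
    simp
  simp only [S1, hurwitzCoeff, ← hsign]
  push_cast
  ring

end HurwitzExpansion

end

open Finset in
/-- Inverse factorial series expansion for the Hurwitz zeta function
(formula (23) of Theorem 4.3, for `Re(s) > 1`). -/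
theorem hurwitzZeta_inverse_factorial_series (y : ℝ) (hy0 : 0 ≤ y) (hy1 : y ≤ 1)
    (s : ℂ) (hs : 1 < s.re) (a : ℕ) (z : ℂ) (hz : 0 < z.re) :
    Summable (fun k : ℕ =>
      ‖(-1 : ℂ) ^ (k + 1 + a) *
          (∑ l ∈ Icc 1 (k + 1),
            cchoose (1 - s) (l + a) * (S1 (k + 1) l : ℂ) * (bernPoly (l + a) y : ℂ)) /
        risingProd z (k + 1)‖) ∧
    (∑' k : ℕ, ((k : ℂ) + z + 1 - y) ^ (-s)) =
      z ^ (1 - s) / (s - 1) +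
        z ^ (1 - s) / (s - 1) *
          ∑ k ∈ Icc 1 a, (-1 : ℂ) ^ k * cchoose (1 - s) k * (bernPoly k y : ℂ) / z ^ k +
        z ^ (1 - s - a) / (s - 1) *
          ∑' k : ℕ,
            (-1 : ℂ) ^ (k + 1 + a) *
                (∑ l ∈ Icc 1 (k + 1),
                  cchoose (1 - s) (l + a) * (S1 (k + 1) l : ℂ) * (bernPoly (l + a) y : ℂ)) /
              risingProd z (k + 1) := by
  have hy : y ∈ Set.Icc (0 : ℝ) 1 := ⟨hy0, hy1⟩
  have hz₀ : z ≠ 0 := Complex.ne_zero_of_re_pos hz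
  have hs₀ : s - 1 ≠ 0 := Complex.ne_zero_of_re_pos (by simpa using hs)
  have hcancel : z ^ (1 - s) * z ^ (s - 1) = 1 := by
    rw [← neg_sub, Complex.cpow_neg, inv_mul_cancel₀ (by simp [Complex.cpow_eq_zero_iff, hz₀])]
  have hshift : z ^ (1 - s - a) * z ^ a = z ^ (1 - s) := by
    rw [Complex.cpow_sub _ _ hz₀, Complex.cpow_natCast, div_mul_cancel₀ _ (pow_ne_zero _ hz₀)]
  simp_rw [hurwitzSummand_eq_inverseFactorialTerm]
  refine ⟨summable_norm_inverseFactorialTerm_hurwitzCoeff hs hz hy a, ?_⟩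
  rw [tsum_inverseFactorialTerm_hurwitzCoeff hs hz hy a, sum_range_hurwitzCoeff_div_pow]
  rw [← hshift] at hcancel ⊢
  field_simp
  linear_combination (-(s - 1) * ∑' k : ℕ, ((k : ℂ) + z + 1 - y) ^ (-s)) * hcancel
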